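/- arXiv:1406.7229 — 3 statements merged into one kernel-verified Lean document; each statement's English description precedes it below -/
import Mathlib

section
/- For every integer m ≥ 2 and every integer t ≥ 1 there exists a constant C = C(t,m), independent of N, such that for every integer N ≥ 1 and every f : G → ℂ, Σ_{x ∈ G} Σ_{k=0}^{⌊N/(m+1)⌋} (k+1)^{2t−1} · |Σ_{j=0}^{t} (−1)^j · C(t,j) · (σ_{N−k+j} * f)(x)|² ≤ C² · Σ_{x ∈ G} |f(x)|², where σ_s = 0 when s > N and C(t,j) is the binomial coefficient. -/
open Finset

noncomputable section

/-- Hamming weight on `(ℤ/(m+1)ℤ)^N`. -/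
def hw {m N : ℕ} (y : Fin N → ZMod (m + 1)) : ℕ :=
  (Finset.univ.filter fun i => y i ≠ 0).card

/-- `L¹`-normalized indicator of the sphere of radius `r` (zero if `r < 0` or `r > N`). -/
def sigmaC (m N : ℕ) (r : ℤ) : (Fin N → ZMod (m + 1)) → ℂ := fun x =>
  if (hw x : ℤ) = r then
    ((Finset.univ.filter fun y : Fin N → ZMod (m + 1) => (hw y : ℤ) = r).card : ℂ)⁻¹
  else 0

/-- Convolution on `(ℤ/(m+1)ℤ)^N`. -/
def convC {m N : ℕ} (g f : (Fin N → ZMod (m + 1)) → ℂ) : (Fin N → ZMod (m + 1)) → ℂ :=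
  fun x => ∑ y, g y * f (x - y)

def Wp (m w u : ℕ) : Polynomial ℂ := (Polynomial.X - 1) ^ w * (Polynomial.X + Polynomial.C (m : ℂ)) ^ u
def Hp (m w u : ℕ) : Polynomial ℝ := (Polynomial.X + 1) ^ w * (Polynomial.X + Polynomial.C (m : ℝ)) ^ u
def cc (m n k : ℕ) : ℝ := (m : ℝ) ^ (n - k) * (n.choose k : ℝ)
def TT (m w u k : ℕ) : ℂ := (Wp m w u).coeff k / (cc m (w + u) k : ℂ)

theorem cc_nonneg (m n k : ℕ) : 0 ≤ cc m n k := by unfold cc; positivity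
theorem cc_pos {m n k : ℕ} (hm : 2 ≤ m) (hk : k ≤ n) : 0 < cc m n k := by
  unfold cc
  have := Nat.choose_pos hk
  positivity
theorem cc_s1 (m n k : ℕ) : ((k : ℝ) + 1) * cc m (n + 1) (k + 1) = (n + 1) * cc m n k := by
  unfold cc
  have h := Nat.add_one_mul_choose_eq n k
  have h' : ((n : ℝ) + 1) * (n.choose k : ℝ) = ((n + 1).choose (k + 1) : ℝ) * (k + 1) := by
    exact_mod_cast h
  rw [Nat.add_sub_add_right]
  linear_combination (-(m : ℝ) ^ (n - k)) * h'
theorem cc_s2 (m n k : ℕ) (hk : k + 1 ≤ n) :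
    cc m n k * ((n : ℝ) - k) = cc m n (k + 1) * (k + 1) * m := by
  unfold cc
  have h := Nat.choose_succ_right_eq n k
  have h' : (n.choose (k + 1) : ℝ) * (k + 1) = (n.choose k : ℝ) * ((n : ℝ) - k) := by
    rw [← Nat.cast_sub (by omega)]
    exact_mod_cast h
  obtain ⟨d, rfl⟩ := Nat.exists_eq_add_of_le hk
  have e1 : k + 1 + d - k = d + 1 := by omega
  have e2 : k + 1 + d - (k + 1) = d := by omega
  rw [e1, e2, pow_succ]
  linear_combination (-(m : ℝ) ^ d * m) * h'

theorem Wp_le_Hp (m w u k : ℕ) : ‖(Wp m w u).coeff k‖ ≤ (Hp m w u).coeff k := by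
  induction w generalizing k with
  | zero =>
    simp [Wp, Hp, Polynomial.coeff_X_add_C_pow, -map_natCast]
  | succ w ih =>
    have e1 : Wp m (w + 1) u = Polynomial.X * Wp m w u - Wp m w u := by unfold Wp; ring
    have e2 : Hp m (w + 1) u = Polynomial.X * Hp m w u + Hp m w u := by unfold Hp; ring
    rw [e1, e2, Polynomial.coeff_sub, Polynomial.coeff_add]
    refine (norm_sub_le _ _).trans (add_le_add ?_ (ih k))
    cases k with
    | zero => simp
    | succ k => simpa [Polynomial.coeff_X_mul] using ih k

theorem Hp_le (m : ℕ) (hm : 2 ≤ m) (w u k : ℕ) (h : (m + 1) * k ≤ w + u) :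
    (Hp m w u).coeff k ≤ (2 / 3 : ℝ) ^ w * cc m (w + u) k := by
  have hm' : (2 : ℝ) ≤ m := by exact_mod_cast hm
  induction w generalizing u k with
  | zero => simp [Hp, Polynomial.coeff_X_add_C_pow, cc, -map_natCast]
  | succ w ih =>
    have e2 : Hp m (w + 1) u = Polynomial.C (1 / m : ℝ) * Hp m w (u + 1)
        + Polynomial.C (1 - 1 / m : ℝ) * (Polynomial.X * Hp m w u) := by
      unfold Hp
      have : (Polynomial.C (1 / m : ℝ) * Polynomial.C (m : ℝ)) = 1 := by
        rw [← Polynomial.C_mul, one_div_mul_cancel (by positivity)]; simp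
      rw [Polynomial.C_sub, Polynomial.C_1]
      linear_combination (-(Polynomial.X + 1) ^ w * (Polynomial.X + Polynomial.C (m : ℝ)) ^ u) * this
    rw [e2, Polynomial.coeff_add, Polynomial.coeff_C_mul, Polynomial.coeff_C_mul]
    have h1 := ih (u + 1) k (by omega)
    have en : w + (u + 1) = w + 1 + u := by omega
    rw [en] at h1
    have hc := cc_nonneg m (w + 1 + u) k
    have hp : (0 : ℝ) < (2 / 3) ^ w := by positivity
    have hi : (1 / m : ℝ) ≤ 1 / 2 := one_div_le_one_div_of_le (by norm_num) hm'
    have hi0 : (0 : ℝ) < 1 / m := by positivity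
    rw [pow_succ]
    cases k with
    | zero =>
      simp only [Polynomial.coeff_X_mul_zero, mul_zero, add_zero]
      have := mul_le_mul_of_nonneg_left h1 hi0.le
      have := mul_nonneg hp.le hc
      nlinarith
    | succ k =>
      rw [Polynomial.coeff_X_mul]
      have h2 := ih u k (by rw [mul_add] at h; omega)
      have h3 := cc_s1 m (w + u) k
      have en' : w + u + 1 = w + 1 + u := by omega
      rw [en'] at h3
      have hb : ((m : ℝ) + 1) * (k + 1) ≤ (w + u : ℕ) + 1 := by
        have : (m + 1) * (k + 1) ≤ (w + u) + 1 := by omega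
        exact_mod_cast this
      have h4 : (m + 1) * cc m (w + u) k ≤ cc m (w + 1 + u) (k + 1) := by
        have hk1 : (0 : ℝ) < k + 1 := by positivity
        have := mul_le_mul_of_nonneg_right hb (cc_nonneg m (w + u) k)
        rw [← h3] at this
        have h5 : ((k : ℝ) + 1) * ((m + 1) * cc m (w + u) k) ≤ (k + 1) * cc m (w + 1 + u) (k + 1) := by
          linarith
        exact le_of_mul_le_mul_left h5 hk1
      have h5 : cc m (w + u) k ≤ cc m (w + 1 + u) (k + 1) / (m + 1) := by
        rw [le_div_iff₀ (by positivity)]; linarith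
      set A := cc m (w + 1 + u) (k + 1)
      calc _ ≤ 1 / (m : ℝ) * ((2 / 3) ^ w * A) + (1 - 1 / m) * ((2 / 3) ^ w * (A / (m + 1))) := by
            have : (0 : ℝ) ≤ 1 - 1 / m := by linarith
            gcongr
            exact h2.trans (by gcongr)
        _ = (2 / 3) ^ w * A * (2 / (m + 1)) := by field_simp; ring
        _ ≤ (2 / 3) ^ w * A * (2 / 3) := by
            have := mul_nonneg hp.le hc
            gcongr
            linarith
        _ = _ := by ring

theorem TT_norm_le (m : ℕ) (hm : 2 ≤ m) (w u k : ℕ) (h : (m + 1) * k ≤ w + u) :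
    ‖TT m w u k‖ ≤ (2 / 3 : ℝ) ^ w := by
  have hk : k ≤ w + u := by nlinarith
  unfold TT
  rw [norm_div, Complex.norm_real, Real.norm_of_nonneg (cc_nonneg _ _ _), div_le_iff₀ (cc_pos hm hk)]
  exact (Wp_le_Hp m w u k).trans (Hp_le m hm w u k h)

theorem TT_zero (m : ℕ) (hm : 2 ≤ m) (u k : ℕ) (h : k ≤ u) : TT m 0 u k = 1 := by
  have := cc_pos hm h
  unfold TT
  have e : (Wp m 0 u).coeff k = (cc m u k : ℂ) := by
    simp [Wp, Polynomial.coeff_X_add_C_pow, cc, -map_natCast]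
  rw [e, zero_add, div_self]
  exact_mod_cast this.ne'

theorem TT_diff (m : ℕ) (hm : 2 ≤ m) (w u k : ℕ) (h : k ≤ w + u) :
    TT m (w + 1) u (k + 1) - TT m (w + 1) u k
      = (((m + 1) / m * ((w + 1) / (w + 1 + u)) : ℝ) : ℂ) * TT m w u k := by
  have p1 := cc_pos hm h
  have p2 := cc_pos (m := m) (n := w + 1 + u) (k := k + 1) hm (by omega)
  have p3 := cc_pos (m := m) (n := w + 1 + u) (k := k) hm (by omega)
  have e1 := cc_s1 m (w + u) k
  have e2 := cc_s2 m (w + 1 + u) k (by omega)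
  rw [show w + u + 1 = w + 1 + u by omega] at e1
  have key : (m : ℂ) * (k + 1) * (Wp m (w + 1) u).coeff (k + 1)
      - ((w + 1 + u : ℕ) - k : ℂ) * (Wp m (w + 1) u).coeff k
      = (w + 1) * (m + 1) * (Wp m w u).coeff k := by
    have hd : (Polynomial.X + Polynomial.C (m : ℂ)) * Polynomial.derivative (Wp m (w + 1) u)
        = Polynomial.C ((w + 1 + u : ℕ) : ℂ) * Wp m (w + 1) u
          + Polynomial.C (((w : ℂ) + 1) * (m + 1)) * Wp m w u := by
      unfold Wp
      rw [Polynomial.derivative_mul, Polynomial.derivative_pow_succ, Polynomial.derivative_pow]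
      cases u with
      | zero => 
        simp
        ring
      | succ u => 
        simp
        ring
    have hk := congrArg (fun p => Polynomial.coeff p k) hd
    simp only [add_mul, Polynomial.coeff_add, Polynomial.coeff_C_mul] at hk
    cases k with
    | zero =>
      simp only [Polynomial.coeff_X_mul_zero, Polynomial.coeff_derivative] at hk
      push_cast at hk ⊢
      linear_combination hk
    | succ k =>
      simp only [Polynomial.coeff_X_mul, Polynomial.coeff_derivative] at hk
      push_cast at hk ⊢
      linear_combination hk
  have q1 : (cc m (w + u) k : ℂ) ≠ 0 := by exact_mod_cast p1.ne'
  have q2 : (cc m (w + 1 + u) (k + 1) : ℂ) ≠ 0 := by exact_mod_cast p2.ne'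
  have q3 : (cc m (w + 1 + u) k : ℂ) ≠ 0 := by exact_mod_cast p3.ne'
  have hm0 : (m : ℂ) ≠ 0 := by exact_mod_cast (by omega : m ≠ 0)
  have hk0 : (k : ℂ) + 1 ≠ 0 := by exact_mod_cast (by omega : k + 1 ≠ 0)
  have hn0 : (w : ℂ) + 1 + u ≠ 0 := by exact_mod_cast (by omega : w + 1 + u ≠ 0)
  have e1' : ((k : ℂ) + 1) * (cc m (w + 1 + u) (k + 1) : ℂ) = (w + 1 + u) * (cc m (w + u) k : ℂ) := by
    have := congrArg (fun x : ℝ => (x : ℂ)) e1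
    push_cast at this
    linear_combination this
  have e2' : (cc m (w + 1 + u) k : ℂ) * ((w + 1 + u : ℕ) - k : ℂ)
      = (cc m (w + 1 + u) (k + 1) : ℂ) * (k + 1) * m := by
    exact_mod_cast congrArg (fun x : ℝ => (x : ℂ)) e2
  have s1 : (cc m (w + u) k : ℂ) = ((k : ℂ) + 1) * (cc m (w + 1 + u) (k + 1) : ℂ) / (w + 1 + u) := by
    rw [e1']; field_simp
  have s0 : ((w + 1 + u : ℕ) - k : ℂ) ≠ 0 := by
    intro h0; rw [h0, mul_zero] at e2'
    exact mul_ne_zero (mul_ne_zero q2 hk0) hm0 e2'.symm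
  have s2 : (cc m (w + 1 + u) k : ℂ)
      = (cc m (w + 1 + u) (k + 1) : ℂ) * (k + 1) * m / ((w + 1 + u : ℕ) - k : ℂ) := by
    rw [← e2']; field_simp
  unfold TT
  rw [s1, s2]
  push_cast at key s0 ⊢
  field_simp
  linear_combination key

open fwdDiff in
theorem fd_congr (t : ℕ) (f g : ℕ → ℂ) (k : ℕ) (h : ∀ i, i ≤ t → f (k + i) = g (k + i)) :
    (Δ_[1])^[t] f k = (Δ_[1])^[t] g k := by
  rw [fwdDiff_iter_eq_sum_shift, fwdDiff_iter_eq_sum_shift]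
  refine Finset.sum_congr rfl fun i hi => ?_
  rw [smul_eq_mul, mul_one, h i (by simpa [Nat.lt_succ_iff] using hi)]

open fwdDiff in
theorem fd_bound (m : ℕ) (hm : 2 ≤ m) (t w u k : ℕ) (h : (m + 1) * k + t ≤ w + u) :
    ‖(Δ_[1])^[t] (TT m w u) k‖ ≤ (2 * w / (w + u) : ℝ) ^ t * (2 / 3) ^ (w - t) := by
  have hm' : (2 : ℝ) ≤ m := by exact_mod_cast hm
  have hmk : k ≤ (m + 1) * k := Nat.le_mul_of_pos_left _ (by omega)
  induction t generalizing w with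
  | zero => simpa using TT_norm_le m hm w u k (by omega)
  | succ t ih =>
    rw [Function.iterate_succ_apply]
    cases w with
    | zero =>
      have e : (Δ_[1])^[t] (Δ_[1] (TT m 0 u)) k = (Δ_[1])^[t] (fun _ => 0) k := by
        apply fd_congr
        intro i hi
        rw [fwdDiff, TT_zero m hm _ _ (by omega), TT_zero m hm _ _ (by omega), sub_self]
      rw [e, fwdDiff_iter_eq_sum_shift]
      simp
    | succ w =>
      have e : (Δ_[1])^[t] (Δ_[1] (TT m (w + 1) u)) k
          = (Δ_[1])^[t] ((((m + 1) / m * ((w + 1) / (w + 1 + u)) : ℝ) : ℂ) • TT m w u) k := by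
        apply fd_congr
        intro i hi
        rw [fwdDiff, TT_diff m hm w u _ (by omega), Pi.smul_apply, smul_eq_mul]
      rw [e, fwdDiff_iter_const_smul, Pi.smul_apply, norm_smul, Complex.norm_real,
        Real.norm_of_nonneg (by positivity), Nat.add_sub_add_right]
      have h1 := ih w (by omega)
      have a1 : ((m : ℝ) + 1) / m ≤ 2 := by rw [div_le_iff₀ (by positivity)]; linarith
      have a2 : (2 * w / (w + u) : ℝ) ≤ 2 * (w + 1 : ℕ) / ((w + 1 : ℕ) + u) := by
        rcases Nat.eq_zero_or_pos w with h0 | h0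
        · subst h0; simp; positivity
        · have : (0 : ℝ) < w := by exact_mod_cast h0
          rw [div_le_div_iff₀ (by positivity) (by positivity)]
          push_cast
          have : (0 : ℝ) ≤ u := by positivity
          nlinarith
      calc _ ≤ (2 * ((w + 1) / (w + 1 + u)) : ℝ) * ((2 * (w + 1 : ℕ) / ((w + 1 : ℕ) + u)) ^ t * (2 / 3) ^ (w - t)) := by
            refine mul_le_mul (by gcongr) (h1.trans (by gcongr)) (norm_nonneg _) (by positivity)
        _ = _ := by rw [pow_succ]; push_cast; ring

def chi {m N : ℕ} (ξ x : Fin N → ZMod (m + 1)) : ℂ := ∏ i, ZMod.stdAddChar (ξ i * x i)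
def hatF {m N : ℕ} (f : (Fin N → ZMod (m + 1)) → ℂ) (ξ : Fin N → ZMod (m + 1)) : ℂ :=
  ∑ x, f x * chi ξ x

theorem chi_add {m N : ℕ} (ξ x y : Fin N → ZMod (m + 1)) : chi ξ (x + y) = chi ξ x * chi ξ y := by
  unfold chi
  rw [← Finset.prod_mul_distrib]
  refine Finset.prod_congr rfl fun i _ => ?_
  rw [Pi.add_apply, mul_add, AddChar.map_add_eq_mul]

theorem chi_norm {m N : ℕ} (ξ x : Fin N → ZMod (m + 1)) : ‖chi ξ x‖ = 1 := by
  unfold chi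
  rw [norm_prod]
  exact Finset.prod_eq_one fun i _ => AddChar.norm_apply _ _

theorem chi_neg {m N : ℕ} (ξ x : Fin N → ZMod (m + 1)) :
    (starRingEnd ℂ) (chi ξ x) = chi ξ (-x) := by
  unfold chi
  rw [map_prod]
  refine Finset.prod_congr rfl fun i _ => ?_
  rw [Pi.neg_apply, mul_neg, AddChar.map_neg_eq_conj]

theorem chi_sum {m N : ℕ} (x : Fin N → ZMod (m + 1)) :
    ∑ ξ, chi ξ x = if x = 0 then ((m + 1 : ℕ) : ℂ) ^ N else 0 := by
  have h : ∏ i : Fin N, ∑ a : ZMod (m + 1), ZMod.stdAddChar (a * x i) = ∑ ξ, chi ξ x := by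
    rw [Finset.prod_univ_sum, Fintype.piFinset_univ]
    rfl
  rw [← h]
  simp_rw [AddChar.sum_mulShift _ (ZMod.isPrimitive_stdAddChar (m + 1)), ZMod.card]
  split_ifs with hx
  · subst hx; simp
  · obtain ⟨i, hi⟩ := Function.ne_iff.mp hx
    refine Finset.prod_eq_zero (Finset.mem_univ i) ?_
    simp only [Pi.zero_apply] at hi
    simp [hi]

theorem plancherel {m N : ℕ} (f : (Fin N → ZMod (m + 1)) → ℂ) :
    ∑ ξ, ‖hatF f ξ‖ ^ 2 = ((m + 1 : ℕ) : ℝ) ^ N * ∑ x, ‖f x‖ ^ 2 := by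
  have : ((∑ ξ, ‖hatF f ξ‖ ^ 2 : ℝ) : ℂ) = ((((m + 1 : ℕ) : ℝ) ^ N * ∑ x, ‖f x‖ ^ 2 : ℝ) : ℂ) := by
    push_cast
    simp_rw [← Complex.mul_conj']
    calc _ = ∑ ξ, ∑ x, ∑ y, f x * (starRingEnd ℂ) (f y) * chi ξ (x - y) := by
          refine Finset.sum_congr rfl fun ξ _ => ?_
          unfold hatF
          rw [map_sum, Finset.sum_mul_sum]
          refine Finset.sum_congr rfl fun x _ => Finset.sum_congr rfl fun y _ => ?_
          rw [map_mul, chi_neg, sub_eq_add_neg, chi_add]; ring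
      _ = ∑ x, ∑ y, f x * (starRingEnd ℂ) (f y) * ∑ ξ, chi ξ (x - y) := by
          rw [Finset.sum_comm]
          refine Finset.sum_congr rfl fun x _ => ?_
          rw [Finset.sum_comm]
          simp_rw [Finset.mul_sum]
      _ = _ := by
          rw [Finset.mul_sum]
          refine Finset.sum_congr rfl fun x _ => ?_
          simp_rw [chi_sum, sub_eq_zero]
          simp
          ring
  exact_mod_cast this

theorem hat_conv {m N : ℕ} (g f : (Fin N → ZMod (m + 1)) → ℂ) (ξ : Fin N → ZMod (m + 1)) :
    hatF (convC g f) ξ = hatF g ξ * hatF f ξ := by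
  unfold hatF convC
  simp_rw [Finset.sum_mul]
  rw [Finset.sum_comm]
  refine Finset.sum_congr rfl fun y _ => ?_
  rw [Finset.mul_sum]
  refine Fintype.sum_equiv (Equiv.subRight y) _ _ fun x => ?_
  simp only [Equiv.subRight_apply]
  have : chi ξ x = chi ξ (x - y) * chi ξ y := by rw [← chi_add, sub_add_cancel]
  rw [this]; ring

theorem hw_le {m N : ℕ} (y : Fin N → ZMod (m + 1)) : hw y ≤ N := by
  unfold hw
  simpa using Finset.card_filter_le (Finset.univ : Finset (Fin N)) (fun i => y i ≠ 0)

theorem hw_compl {m N : ℕ} (y : Fin N → ZMod (m + 1)) :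
    (Finset.univ.filter fun i => y i = 0).card = N - hw y := by
  have h := Finset.card_filter_add_card_filter_not (s := (Finset.univ : Finset (Fin N))) (fun i => y i = 0)
  simp only [Finset.card_univ, Fintype.card_fin] at h
  unfold hw
  simp only [ne_eq]
  omega

theorem poly_id {m N : ℕ} (ξ : Fin N → ZMod (m + 1)) :
    ∑ y, Polynomial.C (chi ξ y) * Polynomial.X ^ (N - hw y) = Wp m (hw ξ) (N - hw ξ) := by
  have h1 : ∀ i : Fin N, ∑ a : ZMod (m + 1), Polynomial.C (ZMod.stdAddChar (ξ i * a) : ℂ) *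
      Polynomial.X ^ (if a = 0 then 1 else 0)
      = if ξ i = 0 then Polynomial.X + Polynomial.C (m : ℂ) else Polynomial.X - 1 := by
    intro i
    have : ∀ a : ZMod (m + 1), Polynomial.C (ZMod.stdAddChar (ξ i * a) : ℂ) *
      Polynomial.X ^ (if a = 0 then 1 else 0) = Polynomial.C (ZMod.stdAddChar (a * ξ i) : ℂ)
        + if a = 0 then Polynomial.X - 1 else 0 := by
      intro a
      split_ifs with h
      · subst h; simp
      · simp [mul_comm]
    simp_rw [this]
    rw [Finset.sum_add_distrib, ← map_sum,
      AddChar.sum_mulShift _ (ZMod.isPrimitive_stdAddChar (m + 1)), ZMod.card]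
    split_ifs with h
    · simp; ring
    · simp
  have h2 : ∏ i : Fin N, ∑ a : ZMod (m + 1), Polynomial.C (ZMod.stdAddChar (ξ i * a) : ℂ) *
      Polynomial.X ^ (if a = 0 then 1 else 0)
      = ∑ y, Polynomial.C (chi ξ y) * Polynomial.X ^ (N - hw y) := by
    rw [Finset.prod_univ_sum, Fintype.piFinset_univ]
    refine Finset.sum_congr rfl fun y _ => ?_
    rw [Finset.prod_mul_distrib, Finset.prod_pow_eq_pow_sum, ← map_prod, ← hw_compl,
      Finset.card_filter]
    rfl
  rw [← h2]
  simp_rw [h1]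
  rw [Finset.prod_ite, Finset.prod_const, Finset.prod_const, hw_compl, mul_comm]
  rfl

theorem sphere_sum {m N : ℕ} (ξ : Fin N → ZMod (m + 1)) (k : ℕ) (hk : k ≤ N) :
    ∑ y, (if (hw y : ℤ) = (N : ℤ) - k then chi ξ y else 0) = (Wp m (hw ξ) (N - hw ξ)).coeff k := by
  rw [← poly_id, Polynomial.finset_sum_coeff]
  refine Finset.sum_congr rfl fun y _ => ?_
  rw [Polynomial.coeff_C_mul, Polynomial.coeff_X_pow]
  have := hw_le y
  have e : ((hw y : ℤ) = (N : ℤ) - k) ↔ k = N - hw y := by omega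
  simp only [e]
  split_ifs <;> simp

theorem sphere_card {m N : ℕ} (k : ℕ) (hk : k ≤ N) :
    ((Finset.univ.filter fun y : Fin N → ZMod (m + 1) => (hw y : ℤ) = (N : ℤ) - k).card : ℂ)
      = (cc m N k : ℂ) := by
  have h := sphere_sum (m := m) (N := N) 0 k hk
  have h0 : hw (0 : Fin N → ZMod (m + 1)) = 0 := by simp [hw]
  have h1 : ∀ y : Fin N → ZMod (m + 1), chi 0 y = 1 := by intro y; simp [chi]
  simp_rw [h1, h0] at h
  rw [Finset.sum_boole] at h
  rw [h]
  simp [Wp, Polynomial.coeff_X_add_C_pow, cc, -map_natCast]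

theorem hat_sigma {m N : ℕ} (ξ : Fin N → ZMod (m + 1)) (k : ℕ) (hk : k ≤ N) :
    hatF (sigmaC m N ((N : ℤ) - k)) ξ = TT m (hw ξ) (N - hw ξ) k := by
  unfold hatF sigmaC TT
  rw [sphere_card k hk, ← sphere_sum ξ k hk, Nat.add_sub_cancel' (hw_le ξ), div_eq_inv_mul,
    Finset.mul_sum]
  refine Finset.sum_congr rfl fun y _ => ?_
  split_ifs <;> simp

theorem hat_sigma_le {m N : ℕ} (ξ : Fin N → ZMod (m + 1)) (r : ℤ) :
    ‖hatF (sigmaC m N r) ξ‖ ≤ 1 := by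
  unfold hatF sigmaC
  refine (norm_sum_le _ _).trans ?_
  simp_rw [norm_mul, chi_norm, mul_one, apply_ite norm, norm_zero, norm_inv, Complex.norm_natCast]
  rw [← Finset.sum_filter, Finset.sum_const, nsmul_eq_mul]
  exact mul_inv_le_one

def MM (m N t k : ℕ) (ξ : Fin N → ZMod (m + 1)) : ℂ :=
  ∑ j ∈ Finset.range (t + 1), (-1 : ℂ) ^ j * (t.choose j : ℂ) *
    hatF (sigmaC m N ((N : ℤ) - k + j)) ξ

theorem MM_le_triv (m N t k : ℕ) (ξ : Fin N → ZMod (m + 1)) : ‖MM m N t k ξ‖ ≤ 2 ^ t := by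
  unfold MM
  refine (norm_sum_le _ _).trans ?_
  have h := Nat.sum_range_choose t
  have h' : ∑ j ∈ Finset.range (t + 1), (t.choose j : ℝ) = 2 ^ t := by exact_mod_cast h
  rw [← h']
  refine Finset.sum_le_sum fun j _ => ?_
  rw [norm_mul, norm_mul, norm_pow, norm_neg, norm_one, one_pow, one_mul, Complex.norm_natCast]
  exact mul_le_of_le_one_right (by positivity) (hat_sigma_le _ _)

open fwdDiff in
theorem MM_eq (m N t k : ℕ) (ξ : Fin N → ZMod (m + 1)) (h : t + k ≤ N) :
    MM m N t (t + k) ξ = (Δ_[1])^[t] (TT m (hw ξ) (N - hw ξ)) k := by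
  rw [fwdDiff_iter_eq_sum_shift, MM, ← Finset.sum_range_reflect]
  refine Finset.sum_congr rfl fun j hj => ?_
  have hj' : j ≤ t := by simpa [Nat.lt_succ_iff] using hj
  have e : (N : ℤ) - (t + k : ℕ) + ((t + 1 - 1 - j : ℕ) : ℤ) = (N : ℤ) - (k + j : ℕ) := by omega
  rw [e, hat_sigma ξ _ (by omega), Nat.add_sub_cancel, Nat.choose_symm hj', smul_eq_mul, mul_one,
    zsmul_eq_mul]
  push_cast
  rfl

theorem exists_M (t : ℕ) : ∃ M : ℝ, 0 ≤ M ∧ ∀ w : ℕ, (2 * w : ℝ) ^ t * (2 / 3) ^ (w - t) ≤ M := by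
  have h := tendsto_pow_const_mul_const_pow_of_abs_lt_one t (r := (2 / 3 : ℝ))
    (by rw [abs_of_pos] <;> norm_num)
  obtain ⟨B, hB⟩ := h.bddAbove_range
  have hB' : ∀ w : ℕ, (w : ℝ) ^ t * (2 / 3) ^ w ≤ B := fun w => hB ⟨w, rfl⟩
  have hB0 : 0 ≤ B := le_trans (by positivity) (hB' 0)
  refine ⟨2 ^ t * (3 / 2) ^ t * B, by positivity, fun w => ?_⟩
  have e : (2 / 3 : ℝ) ^ (w - t) ≤ (3 / 2) ^ t * (2 / 3) ^ w := by
    have : (2 / 3 : ℝ) ^ (w - t) = (3 / 2) ^ t * ((2 / 3) ^ t * (2 / 3) ^ (w - t)) := by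
      rw [← mul_assoc, ← mul_pow]; norm_num
    rw [this, ← pow_add]
    gcongr (3 / 2) ^ t * ?_
    exact pow_le_pow_of_le_one (by norm_num) (by norm_num) (by omega)
  calc _ ≤ (2 * w : ℝ) ^ t * ((3 / 2) ^ t * (2 / 3) ^ w) := by gcongr
    _ = 2 ^ t * (3 / 2) ^ t * ((w : ℝ) ^ t * (2 / 3) ^ w) := by rw [mul_pow]; ring
    _ ≤ _ := by gcongr; exact hB' w

theorem mult_bound (m : ℕ) (hm : 2 ≤ m) (t : ℕ) (ht : 1 ≤ t) : ∃ K : ℝ, 0 ≤ K ∧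
    ∀ N : ℕ, 1 ≤ N → ∀ ξ : Fin N → ZMod (m + 1),
      ∑ k ∈ Finset.range (N / (m + 1) + 1), ((k : ℝ) + 1) ^ (2 * t - 1) * ‖MM m N t k ξ‖ ^ 2 ≤ K := by
  obtain ⟨M, hM0, hM⟩ := exists_M t
  refine ⟨(t : ℝ) * ((t : ℝ) ^ (2 * t - 1) * (2 ^ t) ^ 2) + 2 ^ (2 * t) * M ^ 2, by positivity,
    fun N hN ξ => ?_⟩
  have hN' : (1 : ℝ) ≤ N := by exact_mod_cast hN
  have hterm : ∀ k ∈ Finset.range (N / (m + 1) + 1),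
      ((k : ℝ) + 1) ^ (2 * t - 1) * ‖MM m N t k ξ‖ ^ 2 ≤
        (if k < t then (t : ℝ) ^ (2 * t - 1) * (2 ^ t) ^ 2 else 0)
          + (2 * N : ℝ) ^ (2 * t - 1) * (M / N ^ t) ^ 2 := by
    intro k hk
    have hk1 : k ≤ N / (m + 1) := by simpa [Nat.lt_succ_iff] using hk
    have hk2 : (m + 1) * k ≤ N := (Nat.mul_le_mul_left _ hk1).trans (Nat.mul_div_le N (m + 1))
    have hk3 : k ≤ (m + 1) * k := Nat.le_mul_of_pos_left _ (by omega)
    split_ifs with hkt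
    · have : (0 : ℝ) ≤ (2 * N : ℝ) ^ (2 * t - 1) * (M / N ^ t) ^ 2 := by positivity
      have h1 : (k : ℝ) + 1 ≤ t := by exact_mod_cast hkt
      have h2 := MM_le_triv m N t k ξ
      have : ((k : ℝ) + 1) ^ (2 * t - 1) * ‖MM m N t k ξ‖ ^ 2 ≤ (t : ℝ) ^ (2 * t - 1) * (2 ^ t) ^ 2 := by
        gcongr
      linarith
    · obtain ⟨l, rfl⟩ := Nat.exists_eq_add_of_le (not_lt.mp hkt)
      have hl : (m + 1) * l + t ≤ hw ξ + (N - hw ξ) := by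
        rw [Nat.add_sub_cancel' (hw_le ξ)]
        have : t ≤ (m + 1) * t := Nat.le_mul_of_pos_left _ (by omega)
        rw [mul_add] at hk2
        omega
      have hb := fd_bound m hm t (hw ξ) (N - hw ξ) l hl
      rw [← MM_eq m N t l ξ (by omega), ← Nat.cast_add, Nat.add_sub_cancel' (hw_le ξ)] at hb
      have hb2 : ‖MM m N t (t + l) ξ‖ ≤ M / N ^ t := by
        refine hb.trans ?_
        rw [div_pow, div_mul_eq_mul_div]
        gcongr
        exact hM _
      have h1 : ((t + l : ℕ) : ℝ) + 1 ≤ 2 * N := by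
        have : t + l ≤ N := by omega
        have : ((t + l : ℕ) : ℝ) ≤ N := by exact_mod_cast this
        linarith
      rw [zero_add]
      gcongr
  refine (Finset.sum_le_sum hterm).trans ?_
  rw [Finset.sum_add_distrib]
  refine add_le_add ?_ ?_
  · rw [← Finset.sum_filter, Finset.sum_const, nsmul_eq_mul]
    gcongr
    refine (Finset.card_le_card (t := Finset.range t) ?_).trans (by simp)
    intro k hk
    simpa using (Finset.mem_filter.mp hk).2
  · rw [Finset.sum_const, nsmul_eq_mul, Finset.card_range]
    have h1 : ((N / (m + 1) + 1 : ℕ) : ℝ) ≤ 2 * N := by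
      have : N / (m + 1) + 1 ≤ 2 * N := by have := Nat.div_le_self N (m + 1); omega
      exact_mod_cast this
    calc _ ≤ (2 * N : ℝ) * ((2 * N : ℝ) ^ (2 * t - 1) * (M / N ^ t) ^ 2) := by gcongr
      _ = (2 * N : ℝ) ^ (2 * t) * (M / N ^ t) ^ 2 := by
          rw [← mul_assoc, mul_pow_sub_one (by omega)]
      _ = 2 ^ (2 * t) * M ^ 2 := by
          rw [mul_pow, div_pow, ← pow_mul, mul_comm t 2]
          field_simp
      _ ≤ _ := le_rfl

theorem statement17 (m : ℕ) (hm : 2 ≤ m) (t : ℕ) (ht : 1 ≤ t) :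
    ∃ C : ℝ, ∀ N : ℕ, 1 ≤ N → ∀ f : (Fin N → ZMod (m + 1)) → ℂ,
      ∑ x, ∑ k ∈ Finset.range (N / (m + 1) + 1),
          ((k : ℝ) + 1) ^ (2 * t - 1) *
            ‖∑ j ∈ Finset.range (t + 1),
                (-1 : ℂ) ^ j * (t.choose j : ℂ) *
                  convC (sigmaC m N ((N : ℤ) - k + j)) f x‖ ^ 2 ≤
        C ^ 2 * ∑ x, ‖f x‖ ^ 2 := by

  obtain ⟨K, hK0, hK⟩ := mult_bound m hm t ht
  refine ⟨Real.sqrt K, fun N hN f => ?_⟩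
  rw [Real.sq_sqrt hK0]
  have hq : (0 : ℝ) < ((m + 1 : ℕ) : ℝ) ^ N := by positivity
  set F : ℕ → (Fin N → ZMod (m + 1)) → ℂ := fun k x => ∑ j ∈ Finset.range (t + 1),
    (-1 : ℂ) ^ j * (t.choose j : ℂ) * convC (sigmaC m N ((N : ℤ) - k + j)) f x with hF
  have hhat : ∀ k ξ, hatF (F k) ξ = MM m N t k ξ * hatF f ξ := by
    intro k ξ
    unfold MM
    rw [Finset.sum_mul]
    simp_rw [mul_assoc _ (hatF _ ξ) (hatF f ξ), ← hat_conv]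
    unfold hatF
    simp only [hF, Finset.sum_mul, Finset.mul_sum]
    rw [Finset.sum_comm]
    simp only [mul_assoc]
  have hP : ∀ k, ((m + 1 : ℕ) : ℝ) ^ N * ∑ x, ‖F k x‖ ^ 2
      = ∑ ξ, ‖MM m N t k ξ‖ ^ 2 * ‖hatF f ξ‖ ^ 2 := by
    intro k
    rw [← plancherel]
    simp_rw [hhat, norm_mul, mul_pow]
  refine le_of_mul_le_mul_left ?_ hq
  calc _ = ∑ k ∈ Finset.range (N / (m + 1) + 1), ((k : ℝ) + 1) ^ (2 * t - 1) *
        (((m + 1 : ℕ) : ℝ) ^ N * ∑ x, ‖F k x‖ ^ 2) := by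
        rw [Finset.sum_comm, Finset.mul_sum]
        refine Finset.sum_congr rfl fun k _ => ?_
        rw [← Finset.mul_sum]
        ring
    _ = ∑ ξ, (∑ k ∈ Finset.range (N / (m + 1) + 1), ((k : ℝ) + 1) ^ (2 * t - 1) *
          ‖MM m N t k ξ‖ ^ 2) * ‖hatF f ξ‖ ^ 2 := by
        simp_rw [hP, Finset.mul_sum, Finset.sum_mul]
        rw [Finset.sum_comm]
        simp only [mul_assoc]
    _ ≤ ∑ ξ, K * ‖hatF f ξ‖ ^ 2 := by
        refine Finset.sum_le_sum fun ξ _ => ?_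
        gcongr
        exact hK N hN ξ
    _ = _ := by
        rw [← Finset.mul_sum, plancherel]
        ring
end
end

section
/- For all integers 0 ≤ r, k ≤ N, setting ℓ = max(0, r+k−N) and a_j = C(N,k)^{−1} · C(r,j) · C(N−r, k−j) · m^{−j} for ℓ ≤ j ≤ min(r,k), one has |κ_k^N(r)| ≤ max_{ℓ ≤ j ≤ min(r,k)} a_j; that is, each Krawtchouk polynomial value is dominated by the maximal magnitude among the summands in its defining alternating sum. -/
noncomputable section

/-- The normalized Krawtchouk polynomial
`κ_k^N(r) = Σ_{j=max(0,r+k-N)}^{min(r,k)} (-1)^j C(N,k)⁻¹ C(r,j) C(N-r,k-j) m^{-j}`.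
(Natural subtraction `r + k - N` is exactly `max (0, r + k - N)`.) -/
def kraw (m NN k r : ℕ) : ℝ :=
  ∑ j ∈ Finset.Icc (r + k - NN) (min r k),
    (-1 : ℝ) ^ j * ((NN.choose k : ℝ))⁻¹ * (r.choose j : ℝ) *
      (((NN - r).choose (k - j) : ℝ)) * ((m : ℝ)⁻¹) ^ j

/-- Krawtchouk polynomial with integer arguments: `0` if any argument is negative. -/
def krawZ (m : ℕ) (NN k r : ℤ) : ℝ :=
  if 0 ≤ NN ∧ 0 ≤ k ∧ 0 ≤ r then kraw m NN.toNat k.toNat r.toNat else 0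

/-- Binomial coefficient with integer arguments: `0` if either argument is negative. -/
def chooseZ (a b : ℤ) : ℕ :=
  if 0 ≤ a ∧ 0 ≤ b then a.toNat.choose b.toNat else 0

/-- `a_j = C(N,k)⁻¹ C(r,j) C(N-r,k-j) m^{-j}`, the magnitude of the `j`-th summand
in the defining alternating sum of `κ_k^N(r)`. -/
def aKraw (m N k r j : ℕ) : ℝ :=
  ((N.choose k : ℝ))⁻¹ * (r.choose j : ℝ) * (((N - r).choose (k - j) : ℝ)) * ((m : ℝ)⁻¹) ^ j

lemma alt_aux (n : ℕ) : ∀ (b : ℕ → ℝ) (M : ℝ), (∀ i ≤ n, 0 ≤ b i) →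
    (∀ i, i + 2 ≤ n → b (i+1) ≤ b i → b (i+2) ≤ b (i+1)) → (∀ i ≤ n, b i ≤ M) →
    b 0 - M ≤ ∑ i ∈ Finset.range (n+1), (-1:ℝ)^i * b i ∧
    ∑ i ∈ Finset.range (n+1), (-1:ℝ)^i * b i ≤ M ∧
    ((1 ≤ n → b 1 ≤ b 0) → 0 ≤ ∑ i ∈ Finset.range (n+1), (-1:ℝ)^i * b i ∧
      ∑ i ∈ Finset.range (n+1), (-1:ℝ)^i * b i ≤ b 0) := by
  induction n with
  | zero =>
    intro b M h0 _ hM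
    have := h0 0 le_rfl
    have := hM 0 le_rfl
    simp
    refine ⟨?_, ?_, ?_⟩ <;> linarith
  | succ n ih =>
    intro b M h0 hu hM
    have e : ∑ i ∈ Finset.range (n+1+1), (-1:ℝ)^i * b i
        = b 0 - ∑ i ∈ Finset.range (n+1), (-1:ℝ)^i * b (i+1) := by
      rw [Finset.sum_range_succ', sub_eq_add_neg, ← Finset.sum_neg_distrib, add_comm]
      congr 1
      · simp
      · apply Finset.sum_congr rfl
        intro i _
        ring
    rw [e]
    obtain ⟨h1, h2, h3⟩ := ih (fun i => b (i+1)) M (fun i hi => h0 _ (by omega))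
      (fun i hi h => hu (i+1) (by omega) h) (fun i hi => hM _ (by omega))
    have hb0 := h0 0 (by omega)
    have hbM := hM 0 (by omega)
    simp only [zero_add] at h1 h2 h3
    have key : b 1 ≤ b 0 → 0 ≤ b 0 - ∑ i ∈ Finset.range (n+1), (-1:ℝ)^i * b (i+1) ∧
        b 0 - ∑ i ∈ Finset.range (n+1), (-1:ℝ)^i * b (i+1) ≤ b 0 := by
      intro hle
      obtain ⟨h4, h5⟩ := h3 (fun hn => hu 0 (by omega) hle)
      constructor <;> linarith
    refine ⟨by linarith, ?_, fun h => key (h (by omega))⟩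
    rcases le_total (b 1) (b 0) with h | h
    · linarith [(key h).2]
    · linarith

lemma aKraw_pos (m : ℕ) (hm : 2 ≤ m) (N r k j : ℕ) (hk : k ≤ N)
    (h1 : r + k - N ≤ j) (h2 : j ≤ min r k) (hr : r ≤ N) : 0 < aKraw m N k r j := by
  have a1 : 0 < N.choose k := Nat.choose_pos hk
  have a2 : 0 < r.choose j := Nat.choose_pos (by omega)
  have a3 : 0 < (N-r).choose (k-j) := Nat.choose_pos (by omega)
  unfold aKraw
  positivity

lemma aKraw_rec (m : ℕ) (hm : 2 ≤ m) (N r k j : ℕ) (hr : r ≤ N)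
    (h1 : r + k - N ≤ j) (h2 : j + 1 ≤ min r k) :
    aKraw m N k r (j+1) * (((j:ℝ)+1) * ((N:ℝ)-r-k+j+1) * m)
      = aKraw m N k r j * (((r:ℝ)-j) * ((k:ℝ)-j)) := by
  obtain ⟨t, rfl⟩ : ∃ t, k = j + 1 + t := ⟨k - (j+1), by omega⟩
  obtain ⟨n, rfl⟩ : ∃ n, N = r + n := ⟨N - r, by omega⟩
  have e1 := Nat.choose_succ_right_eq r j
  have e2 := Nat.choose_succ_right_eq n t
  unfold aKraw
  have s1 : r + n - r = n := by omega
  have s2 : j + 1 + t - (j+1) = t := by omega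
  have s3 : j + 1 + t - j = t + 1 := by omega
  rw [s1, s2, s3]
  have e1' : (r.choose (j+1) : ℝ) * (j+1) = r.choose j * ((r:ℝ) - j) := by
    rw [← Nat.cast_sub (by omega : j ≤ r)]; exact_mod_cast e1
  have e2' : (n.choose (t+1) : ℝ) * (t+1) = n.choose t * ((n:ℝ) - t) := by
    rw [← Nat.cast_sub (by omega : t ≤ n)]; exact_mod_cast e2
  have hm0 : (m:ℝ)⁻¹ * m = 1 := inv_mul_cancel₀ (by positivity)
  push_cast
  generalize (((r+n).choose (j+1+t) : ℕ) : ℝ)⁻¹ = c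
  calc _ = c * ((r.choose (j+1) : ℝ) * (j+1)) * (n.choose t * ((n:ℝ) - t)) * (m:ℝ)⁻¹^j
        * ((m:ℝ)⁻¹ * m) := by ring
    _ = _ := by rw [e1', ← e2', hm0]; ring

lemma aKraw_unimodal (m : ℕ) (hm : 2 ≤ m) (N r k j : ℕ) (hr : r ≤ N) (hk : k ≤ N)
    (h1 : r + k - N ≤ j) (h2 : j + 2 ≤ min r k) (h : aKraw m N k r (j+1) ≤ aKraw m N k r j) :
    aKraw m N k r (j+2) ≤ aKraw m N k r (j+1) := by
  have p0 := aKraw_pos m hm N r k j hk h1 (by omega) hr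
  have p1 := aKraw_pos m hm N r k (j+1) hk (by omega) (by omega) hr
  have r0 := aKraw_rec m hm N r k j hr h1 (by omega)
  have r1 := aKraw_rec m hm N r k (j+1) hr (by omega) (by omega)
  have c1 : (j:ℝ) + 2 ≤ r := by exact_mod_cast (by omega : j + 2 ≤ r)
  have c2 : (j:ℝ) + 2 ≤ k := by exact_mod_cast (by omega : j + 2 ≤ k)
  have c3 : (r:ℝ) + k ≤ N + j := by exact_mod_cast (by omega : r + k ≤ N + j)
  have cm : (2:ℝ) ≤ m := by exact_mod_cast hm
  have cj : (0:ℝ) ≤ j := by positivity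
  push_cast at r1
  set Q0 := ((j:ℝ)+1) * ((N:ℝ)-r-k+j+1) * m with hQ0
  set Q1 := ((j:ℝ)+1+1) * ((N:ℝ)-r-k+(j+1)+1) * m with hQ1
  set P0 := ((r:ℝ)-j) * ((k:ℝ)-j) with hP0
  set P1 := ((r:ℝ)-(j+1)) * ((k:ℝ)-(j+1)) with hP1
  have q0 : 0 < Q0 := by
    have : 0 < (N:ℝ)-r-k+j+1 := by linarith
    positivity
  have qq : Q0 ≤ Q1 := by
    rw [hQ0, hQ1]
    apply mul_le_mul_of_nonneg_right _ (by linarith)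
    apply mul_le_mul <;> linarith
  have pp : P1 ≤ P0 := by
    rw [hP0, hP1]
    apply mul_le_mul <;> linarith
  have hPQ : P0 ≤ Q0 := by
    have : aKraw m N k r j * P0 ≤ aKraw m N k r j * Q0 := by
      rw [← r0]; exact mul_le_mul_of_nonneg_right h q0.le
    exact le_of_mul_le_mul_left this p0
  have : aKraw m N k r (j+2) * Q1 ≤ aKraw m N k r (j+1) * Q1 := by
    have e : aKraw m N k r (j+2) * Q1 = aKraw m N k r (j+1) * P1 := r1
    rw [e]
    exact mul_le_mul_of_nonneg_left (by linarith) p1.le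
  exact le_of_mul_le_mul_right this (by linarith)

theorem statement18 (m : ℕ) (hm : 2 ≤ m) (N r k : ℕ) (hr : r ≤ N) (hk : k ≤ N) :
    |kraw m N k r| ≤
      (Finset.Icc (r + k - N) (min r k)).sup'
        (Finset.nonempty_Icc.mpr (by omega)) (fun j => aKraw m N k r j) := by
  generalize_proofs hne
  set M := (Finset.Icc (r + k - N) (min r k)).sup' hne (fun j => aKraw m N k r j) with hM
  obtain ⟨n, hn⟩ : ∃ n, min r k = r + k - N + n := ⟨min r k - (r + k - N), by omega⟩
  have hb : ∀ j, r + k - N ≤ j → j ≤ min r k → aKraw m N k r j ≤ M := fun j h1 h2 =>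
    Finset.le_sup' (fun j => aKraw m N k r j) (Finset.mem_Icc.mpr ⟨h1, h2⟩)
  obtain ⟨h1, h2, -⟩ := alt_aux n (fun i => aKraw m N k r (r + k - N + i)) M
    (fun i hi => (aKraw_pos m hm N r k _ hk (by omega) (by omega) hr).le)
    (fun i hi h => aKraw_unimodal m hm N r k (r + k - N + i) hr hk (by omega) (by omega) h)
    (fun i hi => hb _ (by omega) (by omega))
  have h0 := aKraw_pos m hm N r k (r + k - N + 0) hk (by omega) (by omega) hr
  have e : kraw m N k r = (-1:ℝ)^(r+k-N) *
      ∑ i ∈ Finset.range (n+1), (-1:ℝ)^i * aKraw m N k r (r + k - N + i) := by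
    unfold kraw
    rw [hn, ← Finset.Ico_add_one_right_eq_Icc, Finset.sum_Ico_eq_sum_range, Finset.mul_sum,
      show r + k - N + n + 1 - (r + k - N) = n + 1 by omega]
    apply Finset.sum_congr rfl
    intro i _
    unfold aKraw
    ring
  rw [e, abs_mul, abs_pow, abs_neg, abs_one, one_pow, one_mul, abs_le]
  constructor <;> linarith
end
end

section
/- Let 0 ≤ r ≤ k ≤ N be integers, set ℓ = max(0, r+k−N) and a_j = C(N,k)^{−1} · C(r,j) · C(N−r, k−j) · m^{−j} for integers ℓ ≤ j ≤ r, and let n be the least integer in [ℓ, r] such that a_j ≤ a_n for all integers j ∈ [ℓ, r]. There exists a constant c = c(m) > 0, depending only on m, such that whenever n > 0 and r·k ≥ 2·N·m, one has n ≥ c·r·k/N. -/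
noncomputable section

theorem key_ratio (m N k r n : ℕ) (hm : 2 ≤ m) (hrk : r ≤ k) (hkN : k ≤ N)
    (hl : r + k - N ≤ n) (hn : n < r)
    (h : aKraw m N k r (n + 1) ≤ aKraw m N k r n) :
    (r - n) * (k - n) ≤ m * (n + 1) * N := by
  obtain ⟨p, hp⟩ : ∃ p, k = n + p + 1 := ⟨k - n - 1, by omega⟩
  obtain ⟨M, hM⟩ : ∃ M, N = r + M := ⟨N - r, by omega⟩
  have e1 : k - (n + 1) = p := by omega
  have e2 : k - n = p + 1 := by omega
  have e3 : N - r = M := by omega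
  have hmpos : (0 : ℝ) < m := by exact_mod_cast (by omega : 0 < m)
  have hC : (0 : ℝ) < (N.choose k : ℝ) := by exact_mod_cast Nat.choose_pos hkN
  unfold aKraw at h
  rw [e1, e2, e3] at h
  have h1 : r.choose (n + 1) * M.choose p ≤ m * (r.choose n * M.choose (p + 1)) := by
    have h2 : ((r.choose (n + 1) : ℝ) * M.choose p) ≤ m * (r.choose n * M.choose (p + 1)) := by
      have h3 := mul_le_mul_of_nonneg_left h
        (by positivity : (0 : ℝ) ≤ (N.choose k : ℝ) * (m : ℝ) ^ (n + 1))
      have hq : (m : ℝ) ^ n * (m : ℝ)⁻¹ ^ n = 1 := by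
        rw [← mul_pow, mul_inv_cancel₀ hmpos.ne', one_pow]
      have hc := mul_inv_cancel₀ hC.ne'
      have hi := mul_inv_cancel₀ hmpos.ne'
      calc _ = ((N.choose k : ℝ) * (N.choose k : ℝ)⁻¹) * ((m : ℝ) ^ n * (m : ℝ)⁻¹ ^ n) *
            ((m : ℝ) * (m : ℝ)⁻¹) * ((r.choose (n + 1) : ℝ) * M.choose p) := by
              rw [hc, hq, hi]; ring
        _ = _ := by ring
        _ ≤ _ := h3
        _ = ((N.choose k : ℝ) * (N.choose k : ℝ)⁻¹) * ((m : ℝ) ^ n * (m : ℝ)⁻¹ ^ n) *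
            (m * ((r.choose n : ℝ) * M.choose (p + 1))) := by ring
        _ = _ := by rw [hc, hq]; ring
    exact_mod_cast h2
  have c1 := Nat.choose_succ_right_eq r n
  have c2 := Nat.choose_succ_right_eq M p
  have hpos : 0 < r.choose n * M.choose p :=
    Nat.mul_pos (Nat.choose_pos (by omega)) (Nat.choose_pos (by omega))
  have h4 : (r - n) * (p + 1) ≤ m * (n + 1) * (M - p) := by
    refine Nat.le_of_mul_le_mul_left ?_ hpos
    calc _ = (r.choose n * (r - n)) * M.choose p * (p + 1) := by ring
      _ = (r.choose (n + 1) * M.choose p) * ((n + 1) * (p + 1)) := by rw [← c1]; ring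
      _ ≤ (m * (r.choose n * M.choose (p + 1))) * ((n + 1) * (p + 1)) :=
          Nat.mul_le_mul_right _ h1
      _ = m * (n + 1) * r.choose n * (M.choose (p + 1) * (p + 1)) := by ring
      _ = _ := by rw [c2]; ring
  rw [e2]
  exact h4.trans (Nat.mul_le_mul_left _ (by omega))

theorem statement19 (m : ℕ) (hm : 2 ≤ m) :
    ∃ c : ℝ, 0 < c ∧ ∀ N k r n : ℕ, r ≤ k → k ≤ N →
      -- `n` lies in `[ℓ, r]`, where `ℓ = max (0, r + k - N)` is natural subtraction
      n ∈ Finset.Icc (r + k - N) r →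
      -- `a_n` is a maximal summand magnitude on `[ℓ, r]`
      (∀ j ∈ Finset.Icc (r + k - N) r, aKraw m N k r j ≤ aKraw m N k r n) →
      -- and `n` is least with this property
      (∀ n' ∈ Finset.Icc (r + k - N) r,
        (∀ j ∈ Finset.Icc (r + k - N) r, aKraw m N k r j ≤ aKraw m N k r n') → n ≤ n') →
      0 < n → 2 * N * m ≤ r * k →
      c * r * k / N ≤ (n : ℝ) := by
  have hm1 : (2 : ℝ) ≤ m := by exact_mod_cast hm
  refine ⟨1 / (8 * m), by positivity, ?_⟩
  intro N k r n hrk hkN hn hmax _ hn0 _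
  rw [Finset.mem_Icc] at hn
  have hN : (0 : ℝ) < N := by exact_mod_cast (by omega : 0 < N)
  have goal' : (r : ℝ) * k ≤ 8 * m * N * n := by
    have hkN' : (k : ℝ) ≤ N := by exact_mod_cast hkN
    have hr0 : (0 : ℝ) ≤ r := by positivity
    have hn1 : (1 : ℝ) ≤ n := by exact_mod_cast hn0
    by_cases h2 : r ≤ 2 * n
    · have h2' : (r : ℝ) ≤ 2 * n := by exact_mod_cast h2
      calc (r : ℝ) * k ≤ (2 * n) * N := by gcongr
        _ ≤ (2 * n) * N * (4 * m) := le_mul_of_one_le_right (by positivity) (by linarith)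
        _ = _ := by ring
    · have h3 := key_ratio m N k r n hm hrk hkN hn.1 (by omega)
        (hmax _ (Finset.mem_Icc.2 ⟨by omega, by omega⟩))
      have h4 : r * k ≤ (2 * (r - n)) * (2 * (k - n)) :=
        Nat.mul_le_mul (by omega) (by omega)
      have h5 : m * (n + 1) * N ≤ m * (2 * n) * N := by gcongr; omega
      have h6 : r * k ≤ 8 * m * N * n := by nlinarith
      exact_mod_cast h6
  rw [div_le_iff₀ hN]
  have : 1 / (8 * (m : ℝ)) * r * k = (r * k) / (8 * m) := by ring
  rw [this, div_le_iff₀ (by positivity)]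
  linarith
end
end
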